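/- Suppose in addition that the closure of Ω is convex. Then there is no strictly positive continuous eigenfunction with eigenvalue of modulus less than 1: there exist no λ ∈ ℝ with |λ| < 1 and continuous L-periodic e : ℝ → ℝ with e(s) > 0 for all s satisfying λ·e(s) = (1/π) ∫₀^L k(s,t) e(t) dt for all s ∈ ℝ. (Consequently, a positive continuous eigenfunction of the double layer potential of a convex region must be constant, corresponding to the eigenvalue −1.) -/

import Mathlib

open Real Filter Topology MeasureTheory intervalIntegral

/-- The two-dimensional double layer kernel
`k(s,t) = ⟨q(s) − q(t), n(t)⟩ / ‖q(s) − q(t)‖²` with outward unit normal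
`n(t) = (q'(t)₂, −q'(t)₁)`, written out in coordinates. -/
noncomputable def dlKernel (q : ℝ → EuclideanSpace ℝ (Fin 2)) (s t : ℝ) : ℝ :=
  ((q s 0 - q t 0) * deriv q t 1 - (q s 1 - q t 1) * deriv q t 0) / ‖q s - q t‖ ^ 2

/-- The diagonal value `(1/2)·⟨q''(t), n(t)⟩ = −κ(t)/2` of the continuously
extended double layer kernel. -/
noncomputable def dlDiag (q : ℝ → EuclideanSpace ℝ (Fin 2)) (t : ℝ) : ℝ :=
  (1 / 2) * (deriv (deriv q) t 0 * deriv q t 1 - deriv (deriv q) t 1 * deriv q t 0)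

/-! Identify the plane with `ℂ`. Off the diagonal, `k(s, t)` is minus the derivative in `t` of
`arg (γ t - γ s)`. By convexity and the orientation the whole curve lies to the left of each of its
tangents, so `k ≤ 0`, and as `t` runs from `s` to `s + L` the vector `γ t - γ s` turns from `γ' s`
to `-γ' s`, through the angle `π`. Hence `-k(s, ·) / π` is a probability density for every `s`, and
comparing the eigenvalue equation at the minimum and the maximum of a positive eigenfunction leaves
only the eigenvalue `-1`.

That the tangent at `γ t` does not cut the convex body needs `γ t` not to be interior to it. If it
were, the rest of the curve, which is an arc, would contain the boundary of the body; this would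
embed a sphere in the line, contradicting the intermediate value theorem at antipodal points. -/

theorem exists_sphere_apply_neg_eq {E : Type*} [NormedAddCommGroup E] [NormedSpace ℝ E]
    (hE : 1 < Module.rank ℝ E) {r : ℝ} (hr : 0 ≤ r) {f : Metric.sphere (0 : E) r → ℝ}
    (hf : Continuous f) : ∃ x, f (-x) = f x := by
  have hconn := isConnected_iff_connectedSpace.1 (isConnected_sphere hE (0 : E) hr)
  have hodd : Continuous fun x => f (-x) - f x := by fun_prop
  obtain ⟨x⟩ := hconn.toNonempty
  suffices ∃ y, f (-y) - f y = 0 by simpa only [sub_eq_zero] using this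
  rcases le_total (f (-x)) (f x) with h | h
  · exact intermediate_value_univ x (-x) hodd ⟨by linarith, by rw [neg_neg]; linarith⟩
  · exact intermediate_value_univ (-x) x hodd ⟨by rw [neg_neg]; linarith, by linarith⟩

theorem not_injective_of_continuous_frontier_convex {E : Type*} [NormedAddCommGroup E]
    [NormedSpace ℝ E] (hE : 1 < Module.rank ℝ E) {K : Set E} (hK : Convex ℝ K)
    (hKb : Bornology.IsBounded K) (hKi : (interior K).Nonempty) {f : frontier K → ℝ}
    (hf : Continuous f) : ¬ Function.Injective f := by
  intro hinj
  obtain ⟨e, -, -, he⟩ := exists_homeomorph_image_eq hK hKi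
    (NormedSpace.isVonNBounded_of_isBounded ℝ hKb) (convex_ball (0 : E) 1)
    (by simp [Metric.isOpen_ball.interior_eq]) (NormedSpace.isVonNBounded_ball ℝ E 1)
  rw [frontier_ball _ one_ne_zero] at he
  let φ : Metric.sphere (0 : E) 1 ≃ₜ frontier K :=
    (Homeomorph.setCongr he.symm).trans (e.image (frontier K)).symm
  obtain ⟨x, hx⟩ := exists_sphere_apply_neg_eq hE zero_le_one (hf.comp φ.continuous)
  exact ne_neg_of_mem_unit_sphere ℝ x (φ.injective (hinj hx)).symm

theorem image_ne_frontier_of_convex {E : Type*} [NormedAddCommGroup E]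
    [NormedSpace ℝ E] (hE : 1 < Module.rank ℝ E) {K : Set E} (hK : Convex ℝ K)
    (hKb : Bornology.IsBounded K) (hKi : (interior K).Nonempty) {S : Set ℝ} (hS : IsCompact S)
    {q : ℝ → E} (hq : ContinuousOn q S) (hinj : Set.InjOn q S) : q '' S ≠ frontier K := by
  intro himage
  have := isCompact_iff_compactSpace.1 hS
  have hemb := hq.domRestrict.isClosedEmbedding (Set.injOn_iff_injective.1 hinj)
  have hrange : frontier K = Set.range (S.domRestrict q) := by
    rw [Set.range_domRestrict, himage]
  let φ : frontier K ≃ₜ S :=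
    (Homeomorph.setCongr hrange).trans hemb.isEmbedding.toHomeomorph.symm
  exact not_injective_of_continuous_frontier_convex hE hK hKb hKi
    (continuous_subtype_val.comp φ.continuous) (Subtype.val_injective.comp φ.injective)

theorem injOn_Ico_of_periodic {α : Type*} {q : ℝ → α} {L : ℝ} (hL : 0 < L)
    (hper : Function.Periodic q L) (hinj : Set.InjOn q (Set.Ico 0 L)) (a : ℝ) :
    Set.InjOn q (Set.Ico a (a + L)) := by
  have hmod (u : ℝ) : q (toIcoMod hL 0 u) = q u := hper.sub_zsmul_eq _
  have hmem (u : ℝ) : toIcoMod hL 0 u ∈ Set.Ico 0 L := by simpa using toIcoMod_mem_Ico hL 0 u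
  intro u hu v hv huv
  have h := hinj (hmem u) (hmem v) (by rw [hmod, hmod, huv])
  rw [← (toIcoMod_eq_self hL).2 hu, ← (toIcoMod_eq_self hL).2 hv]
  rw [toIcoMod_inj] at h ⊢
  exact h

theorem notMem_interior_of_frontier_subset_range {E : Type*} [NormedAddCommGroup E]
    [NormedSpace ℝ E] (hE : 1 < Module.rank ℝ E) {K : Set E} (hK : Convex ℝ K)
    (hKb : Bornology.IsBounded K) {q : ℝ → E} {L : ℝ} (hL : 0 < L) (hq : Continuous q)
    (hper : Function.Periodic q L) (hinj : Set.InjOn q (Set.Ico 0 L))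
    (hfr : frontier K ⊆ Set.range q) (t : ℝ) : q t ∉ interior K := by
  intro ht
  have hends : q t ∉ frontier K := fun h => h.2 ht
  set S := Set.Icc t (t + L) ∩ q ⁻¹' frontier K
  have hScompact : IsCompact S := isCompact_Icc.inter_right (isClosed_frontier.preimage hq)
  have hSIco : S ⊆ Set.Ico t (t + L) := by
    rintro u ⟨⟨htu, huL⟩, hu⟩
    refine ⟨htu, huL.lt_of_ne ?_⟩
    rintro rfl
    exact hends (hper t ▸ hu)
  have himage : q '' S = frontier K := by
    refine (Set.image_subset_iff.2 Set.inter_subset_right).antisymm fun y hy => ?_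
    obtain ⟨u, rfl⟩ := hfr hy
    obtain ⟨v, hv, huv⟩ := hper.exists_mem_Ico hL u t
    rw [huv] at hy ⊢
    exact ⟨v, ⟨Set.Ico_subset_Icc_self hv, hy⟩, rfl⟩
  exact image_ne_frontier_of_convex hE hK hKb ⟨_, ht⟩ hScompact hq.continuousOn
    ((injOn_Ico_of_periodic hL hper hinj t).mono hSIco) himage

theorem map_eq_im_div_mul_of_map_eq_zero {f : ℂ →ₗ[ℝ] ℝ} {v : ℂ} (hv : v ≠ 0) (hfv : f v = 0)
    (z : ℂ) : f z = (z / v).im * f (Complex.I * v) := by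
  have hz : z = (z / v).re • v + (z / v).im • (Complex.I * v) := by
    rw [Complex.real_smul, Complex.real_smul, ← mul_assoc, ← add_mul, Complex.re_add_im,
      div_mul_cancel₀ z hv]
  conv_lhs => rw [hz, map_add, map_smul, map_smul, hfv, smul_zero, zero_add, smul_eq_mul]

/-- The height of `z` over the tangent line to the curve `γ` at `γ t`, in units of `‖γ' t‖` and
counted positive to the left of the direction of travel. -/
noncomputable def tangentHeight (γ : ℝ → ℂ) (t : ℝ) (z : ℂ) : ℝ :=
  ((z - γ t) / deriv γ t).im

theorem tangentHeight_nonneg_or_nonpos_of_convex {γ : ℝ → ℂ} {t : ℝ} (hd : deriv γ t ≠ 0)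
    {K : Set ℂ} (hK : Convex ℝ K) (hKi : (interior K).Nonempty) (hmem : ∀ᶠ s in 𝓝 t, γ s ∈ K)
    (ht : γ t ∉ interior K) :
    (∀ z ∈ K, 0 ≤ tangentHeight γ t z) ∨ (∀ z ∈ K, tangentHeight γ t z ≤ 0) := by
  obtain ⟨f, hf⟩ := geometric_hahn_banach_open_point hK.interior isOpen_interior ht
  have hle : ∀ z ∈ K, f z ≤ f (γ t) := fun z hz =>
    closure_minimal (fun w hw => (hf w hw).le) (isClosed_le f.continuous continuous_const)
      ((hK.closure_interior_eq_closure_of_nonempty_interior hKi).symm ▸ subset_closure hz)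
  have hf0 : f (deriv γ t) = 0 :=
    IsLocalMax.hasDerivAt_eq_zero (hmem.mono fun s hs => hle _ hs)
      (f.hasFDerivAt.comp_hasDerivAt t (differentiableAt_of_deriv_ne_zero hd).hasDerivAt)
  set c := f (Complex.I * deriv γ t)
  have hheight (z : ℂ) : f z - f (γ t) = tangentHeight γ t z * c := by
    rw [← map_sub]
    exact map_eq_im_div_mul_of_map_eq_zero (f := (f : ℂ →ₗ[ℝ] ℝ)) hd hf0 _
  have hc : c ≠ 0 := by
    obtain ⟨w, hw⟩ := hKi
    intro hc
    have := hheight w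
    rw [hc, mul_zero] at this
    linarith [hf w hw]
  have hprod (z : ℂ) (hz : z ∈ K) : tangentHeight γ t z * c ≤ 0 := by
    linarith [hheight z, hle z hz]
  rcases hc.lt_or_gt with hc | hc
  · exact .inl fun z hz => nonneg_of_mul_nonpos_left (hprod z hz) hc
  · exact .inr fun z hz => nonpos_of_mul_nonpos_left (hprod z hz) hc

theorem exists_tangentHeight_ne_zero {γ : ℝ → ℂ} (hd : ∀ s, deriv γ s ≠ 0) {a b : ℝ}
    (hab : a < b) (hclosed : γ a = γ b) (t : ℝ) : ∃ s, tangentHeight γ t (γ s) ≠ 0 := by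
  by_contra! h
  have hquot (s : ℝ) :
      HasDerivAt (fun u => (γ u - γ t) / deriv γ t) (deriv γ s / deriv γ t) s :=
    ((differentiableAt_of_deriv_ne_zero (hd s)).hasDerivAt.sub_const _).div_const _
  have hre (s : ℝ) := Complex.reCLM.hasFDerivAt.comp_hasDerivAt s (hquot s)
  have him (s : ℝ) := Complex.imCLM.hasFDerivAt.comp_hasDerivAt s (hquot s)
  have him0 (s : ℝ) : (deriv γ s / deriv γ t).im = 0 := by
    have hconst : Complex.imCLM ∘ (fun u => (γ u - γ t) / deriv γ t) = fun _ => 0 := funext h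
    exact (hconst ▸ him s).unique (hasDerivAt_const s 0)
  obtain ⟨c, -, hc⟩ := exists_hasDerivAt_eq_zero hab
    (fun s _ => (hre s).continuousAt.continuousWithinAt)
    (by simp only [Function.comp_apply, hclosed]) fun s _ => hre s
  exact div_ne_zero (hd c) (hd t) (Complex.ext hc (him0 c))

theorem tangentHeight_nonneg_or_nonpos {γ : ℝ → ℂ} (hγ : ContDiff ℝ 1 γ)
    (hd : ∀ s, deriv γ s ≠ 0) {a b : ℝ} (hab : a < b) (hclosed : γ a = γ b)
    (hside : ∀ t, (∀ s, 0 ≤ tangentHeight γ t (γ s)) ∨ (∀ s, tangentHeight γ t (γ s) ≤ 0)) :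
    (∀ s t, 0 ≤ tangentHeight γ t (γ s)) ∨ (∀ s t, tangentHeight γ t (γ s) ≤ 0) := by
  have hcont (s : ℝ) : Continuous fun t => tangentHeight γ t (γ s) :=
    Complex.continuous_im.comp
      ((continuous_const.sub hγ.continuous).div (hγ.continuous_deriv le_rfl) hd)
  set A := ⋂ s, {t | 0 ≤ tangentHeight γ t (γ s)}
  set B := ⋂ s, {t | tangentHeight γ t (γ s) ≤ 0}
  have hA : IsClosed A := isClosed_iInter fun s => isClosed_le continuous_const (hcont s)
  have hB : IsClosed B := isClosed_iInter fun s => isClosed_le (hcont s) continuous_const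
  have hcover : Set.univ ⊆ A ∪ B := fun t _ =>
    (hside t).imp (fun h => Set.mem_iInter.2 h) (fun h => Set.mem_iInter.2 h)
  have hdisj : Set.univ ∩ (A ∩ B) = ∅ := by
    refine Set.eq_empty_of_forall_notMem fun t ht => ?_
    obtain ⟨s, hs⟩ := exists_tangentHeight_ne_zero hd hab hclosed t
    exact hs (le_antisymm (Set.mem_iInter.1 ht.2.2 s) (Set.mem_iInter.1 ht.2.1 s))
  refine (isPreconnected_iff_subset_of_disjoint_closed.1 isPreconnected_univ A B hA hB hcover
    hdisj).imp (fun h s t => ?_) (fun h s t => ?_)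
  · exact Set.mem_iInter.1 (h (Set.mem_univ t)) s
  · exact Set.mem_iInter.1 (h (Set.mem_univ t)) s

theorem tendsto_arg_nhdsGT {z : ℝ → ℂ} {v : ℂ} {a : ℝ} (hz : HasDerivWithinAt z v (Set.Ioi a) a)
    (ha : z a = 0) (hv : v ∈ Complex.slitPlane) :
    Tendsto (fun t => (z t).arg) (𝓝[>] a) (𝓝 v.arg) := by
  have hslope := (hasDerivWithinAt_iff_tendsto_slope' Set.self_notMem_Ioi).1 hz
  refine ((Complex.continuousAt_arg hv).tendsto.comp hslope).congr' ?_
  filter_upwards [self_mem_nhdsWithin] with t ht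
  rw [Function.comp_apply, slope_def_module, ha, sub_zero, Complex.real_smul,
    Complex.arg_real_mul _ (inv_pos.2 (sub_pos.2 ht))]

theorem tendsto_arg_nhdsLT {z : ℝ → ℂ} {v : ℂ} {b : ℝ} (hz : HasDerivWithinAt z v (Set.Iio b) b)
    (hb : z b = 0) (hv : -v ∈ Complex.slitPlane) :
    Tendsto (fun t => (z t).arg) (𝓝[<] b) (𝓝 (-v).arg) := by
  have hslope := (hasDerivWithinAt_iff_tendsto_slope' Set.self_notMem_Iio).1 hz
  refine ((Complex.continuousAt_arg hv).tendsto.comp hslope.neg).congr' ?_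
  filter_upwards [self_mem_nhdsWithin] with t ht
  rw [Function.comp_apply, slope_def_module, hb, sub_zero, ← neg_smul, ← inv_neg, neg_sub,
    Complex.real_smul, Complex.arg_real_mul _ (inv_pos.2 (sub_pos.2 ht))]

theorem hasDerivAt_arg {z : ℝ → ℂ} {z' : ℂ} {t : ℝ} (hz : HasDerivAt z z' t)
    (ht : z t ∈ Complex.slitPlane) : HasDerivAt (fun u => (z u).arg) (z' / z t).im t := by
  simpa only [Function.comp_def, Complex.imCLM_apply, Complex.log_im] using
    Complex.imCLM.hasFDerivAt.comp_hasDerivAt t (hz.clog_real ht)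

-- Multiplication by `-I / v` moves the half plane containing the loop into `{0 ≤ re}`, where `arg`
-- is smooth away from the origin; along the loop it grows from `arg (-I)` to `arg I`.
theorem integral_im_div_eq_pi {z z' : ℝ → ℂ} {v : ℂ} {φ : ℝ → ℝ} {a b : ℝ} (hab : a < b)
    (hv : v ≠ 0) (ha : z a = 0) (hb : z b = 0) (hza : HasDerivWithinAt z v (Set.Ioi a) a)
    (hzb : HasDerivWithinAt z v (Set.Iio b) b) (hz : ∀ t ∈ Set.Ioo a b, HasDerivAt z (z' t) t)
    (hz0 : ∀ t ∈ Set.Ioo a b, z t ≠ 0) (hside : ∀ t ∈ Set.Ioo a b, 0 ≤ (z t / v).im)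
    (hφ : IntervalIntegrable φ volume a b) (hφz : ∀ t ∈ Set.Ioo a b, φ t = (z' t / z t).im) :
    ∫ t in a..b, φ t = π := by
  set c := -Complex.I / v
  have hc : c ≠ 0 := div_ne_zero (neg_ne_zero.2 Complex.I_ne_zero) hv
  have hcv : c * v = -Complex.I := div_mul_cancel₀ _ hv
  have hslit : ∀ t ∈ Set.Ioo a b, c * z t ∈ Complex.slitPlane := by
    intro t ht
    have hre : 0 ≤ (c * z t).re := by
      rw [show c * z t = -Complex.I * (z t / v) by ring]
      simpa using hside t ht
    have hne : c * z t ≠ 0 := mul_ne_zero hc (hz0 t ht)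
    exact Complex.mem_slitPlane_iff.2 <| hre.lt_or_eq.imp_right fun h him =>
      hne (Complex.ext h.symm him)
  have hderiv : ∀ t ∈ Set.Ioo a b, HasDerivAt (fun t => (c * z t).arg) (φ t) t := by
    intro t ht
    rw [hφz t ht, ← mul_div_mul_left _ _ hc]
    exact hasDerivAt_arg ((hz t ht).const_mul c) (hslit t ht)
  have hlima := tendsto_arg_nhdsGT (hza.const_mul c) (by rw [ha, mul_zero])
    (by simp [hcv, Complex.mem_slitPlane_iff])
  have hlimb := tendsto_arg_nhdsLT (hzb.const_mul c) (by rw [hb, mul_zero])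
    (by simp [hcv, Complex.mem_slitPlane_iff])
  rw [integral_eq_sub_of_hasDerivAt_of_tendsto hab hderiv hφ hlima hlimb, hcv, neg_neg,
    Complex.arg_I, Complex.arg_neg_I]
  ring

theorem eigenvalue_eq_of_integral_eq {K : ℝ → ℝ → ℝ} {e : ℝ → ℝ} {a b c μ : ℝ} (hab : a ≤ b)
    (hKint : ∀ s ∈ Set.Icc a b, IntervalIntegrable (K s) volume a b)
    (hK : ∀ s ∈ Set.Icc a b, ∀ t ∈ Set.Icc a b, 0 ≤ K s t)
    (hc : ∀ s ∈ Set.Icc a b, ∫ t in a..b, K s t = c)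
    (he : ContinuousOn e (Set.Icc a b)) (hpos : ∀ s ∈ Set.Icc a b, 0 < e s)
    (heig : ∀ s ∈ Set.Icc a b, μ * e s = ∫ t in a..b, K s t * e t) : μ = c := by
  have hKe : ∀ s ∈ Set.Icc a b, IntervalIntegrable (fun t => K s t * e t) volume a b :=
    fun s hs => (hKint s hs).mul_continuousOn (by rwa [Set.uIcc_of_le hab])
  have hconst : ∀ s ∈ Set.Icc a b, ∫ t in a..b, K s t * e s = c * e s :=
    fun s hs => by rw [intervalIntegral.integral_mul_const, hc s hs]
  have hnonempty : (Set.Icc a b).Nonempty := Set.nonempty_Icc.2 hab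
  obtain ⟨m, hm, hmin⟩ := isCompact_Icc.exists_isMinOn hnonempty he
  obtain ⟨M, hM, hmax⟩ := isCompact_Icc.exists_isMaxOn hnonempty he
  have hle : c * e m ≤ μ * e m := by
    rw [← hconst m hm, heig m hm]
    exact intervalIntegral.integral_mono_on hab ((hKint m hm).mul_const _) (hKe m hm)
      fun t ht => mul_le_mul_of_nonneg_left (hmin ht) (hK m hm t ht)
  have hge : μ * e M ≤ c * e M := by
    rw [← hconst M hM, heig M hM]
    exact intervalIntegral.integral_mono_on hab (hKe M hM) ((hKint M hM).mul_const _)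
      fun t ht => mul_le_mul_of_nonneg_left (hmax ht) (hK M hM t ht)
  exact le_antisymm (le_of_mul_le_mul_right hge (hpos M hM))
    (le_of_mul_le_mul_right hle (hpos m hm))

theorem dense_setOf_ne_of_deriv_ne_zero {F : Type*} [NormedAddCommGroup F] [NormedSpace ℝ F]
    {γ : ℝ → F} (hd : ∀ t, deriv γ t ≠ 0) (z : F) : Dense {t | γ t ≠ z} := fun t =>
  mem_closure_iff_frequently.2 <|
    ((differentiableAt_of_deriv_ne_zero (hd t)).hasDerivAt.eventually_ne
      (hd t)).frequently.filter_mono nhdsWithin_le_nhds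

/-- The double layer kernel `⟨γ s - γ t, n t⟩ / ‖γ s - γ t‖²` of a curve in the complex plane, with
`n t = -i γ' t`. It is minus the derivative of `t ↦ arg (γ t - γ s)`, and equals `0` where
`γ s = γ t`, because division by zero returns `0`. -/
noncomputable def complexDLKernel (γ : ℝ → ℂ) (s t : ℝ) : ℝ :=
  (deriv γ t / (γ s - γ t)).im

theorem complexDLKernel_eq_neg_tangentHeight_div (γ : ℝ → ℂ) (s t : ℝ) :
    complexDLKernel γ s t =
      -tangentHeight γ t (γ s) / Complex.normSq ((γ s - γ t) / deriv γ t) := by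
  rw [complexDLKernel, ← inv_div, Complex.inv_im, tangentHeight]

theorem complexDLKernel_nonpos {γ : ℝ → ℂ} {s t : ℝ} (h : 0 ≤ tangentHeight γ t (γ s)) :
    complexDLKernel γ s t ≤ 0 :=
  complexDLKernel_eq_neg_tangentHeight_div γ s t ▸
    div_nonpos_of_nonpos_of_nonneg (neg_nonpos.2 h) (Complex.normSq_nonneg _)

theorem complexDLKernel_nonneg {γ : ℝ → ℂ} {s t : ℝ} (h : tangentHeight γ t (γ s) ≤ 0) :
    0 ≤ complexDLKernel γ s t :=
  complexDLKernel_eq_neg_tangentHeight_div γ s t ▸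
    div_nonneg (neg_nonneg.2 h) (Complex.normSq_nonneg _)

theorem periodic_deriv {F : Type*} [NormedAddCommGroup F] [NormedSpace ℝ F] {γ : ℝ → F} {L : ℝ}
    (hper : Function.Periodic γ L) : Function.Periodic (deriv γ) L := fun t => by
  rw [← deriv_comp_add_const, hper.funext]

/-- `k` is a continuous extension to the diagonal of the double layer kernel of the curve `γ`. -/
structure IsDLKernelExtension (γ : ℝ → ℂ) (k : ℝ → ℝ → ℝ) : Prop where
  continuous : Continuous fun p : ℝ × ℝ => k p.1 p.2
  eq_of_ne : ∀ s t, γ s ≠ γ t → k s t = complexDLKernel γ s t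

namespace IsDLKernelExtension

variable {γ : ℝ → ℂ} {k : ℝ → ℝ → ℝ}

theorem continuous_right (hk : IsDLKernelExtension γ k) (s : ℝ) : Continuous (k s) :=
  hk.continuous.comp (Continuous.prodMk_right s)

theorem mem_of_isClosed (hk : IsDLKernelExtension γ k) (hd : ∀ t, deriv γ t ≠ 0) {C : Set ℝ}
    (hC : IsClosed C) (h : ∀ s t, complexDLKernel γ s t ∈ C) (s t : ℝ) : k s t ∈ C :=
  hC.preimage (hk.continuous_right s) |>.closure_subset_iff.2
    (fun u hu => by
      rw [Set.mem_preimage, hk.eq_of_ne s u (Ne.symm hu)]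
      exact h s u)
    (dense_setOf_ne_of_deriv_ne_zero hd (γ s) t)

theorem nonpos (hk : IsDLKernelExtension γ k) (hd : ∀ t, deriv γ t ≠ 0)
    (hside : ∀ s t, 0 ≤ tangentHeight γ t (γ s)) (s t : ℝ) : k s t ≤ 0 :=
  hk.mem_of_isClosed hd isClosed_Iic (fun s t => complexDLKernel_nonpos (hside s t)) s t

theorem nonneg (hk : IsDLKernelExtension γ k) (hd : ∀ t, deriv γ t ≠ 0)
    (hside : ∀ s t, tangentHeight γ t (γ s) ≤ 0) (s t : ℝ) : 0 ≤ k s t :=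
  hk.mem_of_isClosed hd isClosed_Ici (fun s t => complexDLKernel_nonneg (hside s t)) s t

theorem periodic_right (hk : IsDLKernelExtension γ k) (hd : ∀ t, deriv γ t ≠ 0) {L : ℝ}
    (hper : Function.Periodic γ L) (s : ℝ) : Function.Periodic (k s) L := by
  refine congrFun (((hk.continuous_right s).comp (continuous_add_const L)).ext_on
    (dense_setOf_ne_of_deriv_ne_zero hd (γ s)) (hk.continuous_right s) fun t ht => ?_)
  have ht' : γ s ≠ γ t := Ne.symm ht
  rw [Function.comp_apply, hk.eq_of_ne s t ht', hk.eq_of_ne s (t + L) (by rwa [hper t]),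
    complexDLKernel, complexDLKernel, hper t, periodic_deriv hper t]

theorem integral_eq_neg_pi (hk : IsDLKernelExtension γ k) (hd : ∀ t, deriv γ t ≠ 0) {L : ℝ}
    (hL : 0 < L) (hper : Function.Periodic γ L) (hinj : Set.InjOn γ (Set.Ico 0 L))
    (hside : ∀ s t, 0 ≤ tangentHeight γ t (γ s)) (s : ℝ) : ∫ t in 0..L, k s t = -π := by
  have hderiv (t : ℝ) : HasDerivAt (fun t => γ t - γ s) (deriv γ t) t :=
    (differentiableAt_of_deriv_ne_zero (hd t)).hasDerivAt.sub_const _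
  have hne : ∀ t ∈ Set.Ioo s (s + L), γ t ≠ γ s := fun t ht h =>
    ht.1.ne' (injOn_Ico_of_periodic hL hper hinj s (Set.Ioo_subset_Ico_self ht)
      ⟨le_rfl, lt_add_of_pos_right s hL⟩ h)
  have hpi : ∫ t in s..s + L, -k s t = π := by
    refine integral_im_div_eq_pi (z := fun t => γ t - γ s) (lt_add_of_pos_right s hL) (hd s)
      (sub_self _) (sub_eq_zero.2 (hper s)) (hderiv s).hasDerivWithinAt
      (periodic_deriv hper s ▸ (hderiv (s + L)).hasDerivWithinAt) (fun t _ => hderiv t)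
      (fun t ht => sub_ne_zero.2 (hne t ht)) (fun t _ => hside t s)
      ((hk.continuous_right s).neg.intervalIntegrable _ _) fun t ht => ?_
    rw [hk.eq_of_ne s t (hne t ht).symm, complexDLKernel, ← neg_sub (γ t), div_neg,
      Complex.neg_im, neg_neg]
  have hshift := (hk.periodic_right hd hper s).intervalIntegral_add_eq 0 s
  rw [zero_add] at hshift
  rw [hshift, ← hpi, intervalIntegral.integral_neg, neg_neg]

end IsDLKernelExtension
namespace IsDLKernelExtension

variable {γ : ℝ → ℂ} {k : ℝ → ℝ → ℝ}

theorem eigenvalue_eq_neg_one_of_tangentHeight_nonneg (hk : IsDLKernelExtension γ k)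
    (hd : ∀ t, deriv γ t ≠ 0) {L : ℝ} (hL : 0 < L) (hper : Function.Periodic γ L)
    (hinj : Set.InjOn γ (Set.Ico 0 L)) (hside : ∀ s t, 0 ≤ tangentHeight γ t (γ s)) {e : ℝ → ℝ}
    (he : Continuous e) (hpos : ∀ s, 0 < e s) {μ : ℝ}
    (heig : ∀ s, μ * e s = (1 / π) * ∫ t in 0..L, k s t * e t) : μ = -1 := by
  have hrow (s : ℝ) : ∫ t in 0..L, -k s t = π := by
    rw [intervalIntegral.integral_neg, hk.integral_eq_neg_pi hd hL hper hinj hside s, neg_neg]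
  have hneg (s : ℝ) : -(π * μ) * e s = ∫ t in 0..L, -k s t * e t := by
    simp only [neg_mul, intervalIntegral.integral_neg]
    rw [mul_assoc, heig s, ← mul_assoc, mul_one_div_cancel pi_ne_zero, one_mul]
  have hμ : -(π * μ) = π := eigenvalue_eq_of_integral_eq (K := fun s t => -k s t) hL.le
    (fun s _ => (hk.continuous_right s).neg.intervalIntegrable _ _)
    (fun s _ t _ => neg_nonneg.2 (hk.nonpos hd hside s t)) (fun s _ => hrow s)
    he.continuousOn (fun s _ => hpos s) fun s _ => hneg s
  exact mul_left_cancel₀ pi_ne_zero (by linarith)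

theorem tangentHeight_nonneg_of_convex (hk : IsDLKernelExtension γ k) (hγ : ContDiff ℝ 1 γ)
    (hd : ∀ t, deriv γ t ≠ 0) {L : ℝ} (hL : 0 < L) (hper : Function.Periodic γ L)
    (hinj : Set.InjOn γ (Set.Ico 0 L)) {K : Set ℂ} (hK : Convex ℝ K)
    (hKb : Bornology.IsBounded K) (hKi : (interior K).Nonempty) (hmem : ∀ t, γ t ∈ K)
    (hfr : frontier K ⊆ Set.range γ) (hdiag : ∫ t in 0..L, k t t < 0) (s t : ℝ) :
    0 ≤ tangentHeight γ t (γ s) := by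
  have hrank : 1 < Module.rank ℝ ℂ := Complex.rank_real_complex ▸ Nat.one_lt_ofNat
  have hside (t : ℝ) :
      (∀ s, 0 ≤ tangentHeight γ t (γ s)) ∨ (∀ s, tangentHeight γ t (γ s) ≤ 0) :=
    (tangentHeight_nonneg_or_nonpos_of_convex (hd t) hK hKi (Eventually.of_forall hmem)
      (notMem_interior_of_frontier_subset_range hrank hK hKb hL hγ.continuous hper hinj hfr t)).imp
      (fun h s => h _ (hmem s)) (fun h s => h _ (hmem s))
  refine (tangentHeight_nonneg_or_nonpos hγ hd hL hper.eq.symm hside).resolve_right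
    (fun h => hdiag.not_ge ?_) s t
  exact intervalIntegral.integral_nonneg hL.le fun t _ => hk.nonneg hd h t t

end IsDLKernelExtension

/-- The plane as `ℂ`, with the real axis as first coordinate axis. -/
noncomputable def planeToComplex : EuclideanSpace ℝ (Fin 2) ≃ₗᵢ[ℝ] ℂ :=
  Complex.orthonormalBasisOneI.repr.symm

theorem planeToComplex_re (x : EuclideanSpace ℝ (Fin 2)) : (planeToComplex x).re = x 0 := by
  simp [planeToComplex]

theorem planeToComplex_im (x : EuclideanSpace ℝ (Fin 2)) : (planeToComplex x).im = x 1 := by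
  simp [planeToComplex]

theorem deriv_planeToComplex_comp (q : ℝ → EuclideanSpace ℝ (Fin 2)) (t : ℝ) :
    deriv (planeToComplex ∘ q) t = planeToComplex (deriv q t) := by
  rw [← fderiv_apply_one_eq_deriv, planeToComplex.comp_fderiv, ← fderiv_apply_one_eq_deriv]
  rfl

theorem dlKernel_eq_complexDLKernel (q : ℝ → EuclideanSpace ℝ (Fin 2)) (s t : ℝ) :
    dlKernel q s t = complexDLKernel (planeToComplex ∘ q) s t := by
  rw [complexDLKernel, deriv_planeToComplex_comp, Function.comp_apply, Function.comp_apply,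
    ← map_sub, dlKernel, ← planeToComplex.norm_map, ← Complex.normSq_eq_norm_sq, Complex.div_im]
  simp only [planeToComplex_re, planeToComplex_im, PiLp.sub_apply]
  ring

theorem isDLKernelExtension_planeToComplex {q : ℝ → EuclideanSpace ℝ (Fin 2)} {k : ℝ → ℝ → ℝ}
    (hcont : Continuous fun p : ℝ × ℝ => k p.1 p.2)
    (hoff : ∀ s t, q s ≠ q t → k s t = dlKernel q s t) :
    IsDLKernelExtension (planeToComplex ∘ q) k where
  continuous := hcont
  eq_of_ne s t h := by
    rw [hoff s t (mt (congrArg planeToComplex) h), dlKernel_eq_complexDLKernel]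

theorem integral_dlDiag (q : ℝ → EuclideanSpace ℝ (Fin 2)) (a b : ℝ) :
    ∫ t in a..b, dlDiag q t = -(1 / 2) * ∫ t in a..b,
      (deriv (deriv q) t 1 * deriv q t 0 - deriv (deriv q) t 0 * deriv q t 1) := by
  rw [← intervalIntegral.integral_const_mul]
  congr 1 with t
  rw [dlDiag]
  ring

theorem no_positive_eigenfunction_of_convex_general
    (L : ℝ) (hL : 0 < L)
    (q : ℝ → EuclideanSpace ℝ (Fin 2))
    (hq : ContDiff ℝ 2 q)
    (hper : ∀ s, q (s + L) = q s)
    (hunit : ∀ s, ‖deriv q s‖ = 1)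
    (hinj : Set.InjOn q (Set.Ico 0 L))
    (horient : ∫ t in 0..L,
      (deriv (deriv q) t 1 * deriv q t 0 - deriv (deriv q) t 0 * deriv q t 1) = 2 * π)
    (Ω : Set (EuclideanSpace ℝ (Fin 2)))
    (hΩopen : IsOpen Ω)
    (hΩbd : Bornology.IsBounded Ω)
    (hfront : frontier Ω = Set.range q)
    (hconv : Convex ℝ (closure Ω))
    (ktil : ℝ → ℝ → ℝ)
    (hcont : Continuous (fun p : ℝ × ℝ => ktil p.1 p.2))
    (hoff : ∀ s t, q s ≠ q t → ktil s t = dlKernel q s t)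
    (hdiag : ∀ t, ktil t t = dlDiag q t)
    (lam : ℝ) (e : ℝ → ℝ) (he : Continuous e) (hpos : ∀ s, 0 < e s)
    (heig : ∀ s : ℝ, lam * e s = (1 / π) * ∫ t in 0..L, ktil s t * e t) :
    lam = -1 := by
  set γ := planeToComplex ∘ q
  let φ := planeToComplex.toHomeomorph
  have hk : IsDLKernelExtension γ ktil := isDLKernelExtension_planeToComplex hcont hoff
  have hγ : ContDiff ℝ 1 γ := planeToComplex.contDiff.comp (hq.of_le one_le_two)
  have hd (t : ℝ) : deriv γ t ≠ 0 := by
    rw [deriv_planeToComplex_comp, ← norm_ne_zero_iff, planeToComplex.norm_map, hunit t]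
    exact one_ne_zero
  have hγper : Function.Periodic γ L := fun s => congrArg planeToComplex (hper s)
  have hγinj : Set.InjOn γ (Set.Ico 0 L) := planeToComplex.injective.comp_injOn hinj
  have hK : Convex ℝ (φ '' closure Ω) := hconv.is_linear_image planeToComplex.isLinear
  have hKb : Bornology.IsBounded (φ '' closure Ω) :=
    planeToComplex.lipschitz.isBounded_image hΩbd.closure
  have hmem (t : ℝ) : q t ∈ closure Ω := frontier_subset_closure (hfront ▸ Set.mem_range_self t)
  have hKi : (interior (φ '' closure Ω)).Nonempty := by
    rw [← φ.image_interior]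
    exact ((closure_nonempty_iff.1 ⟨q 0, hmem 0⟩).mono hΩopen.subset_interior_closure).image φ
  have hfr : frontier (φ '' closure Ω) ⊆ Set.range γ := by
    rw [← φ.image_frontier, Set.range_comp, ← hfront]
    exact Set.image_mono frontier_closure_subset
  have hneg : ∫ t in 0..L, ktil t t < 0 := by
    simp only [hdiag, integral_dlDiag, horient]
    linarith [pi_pos]
  exact hk.eigenvalue_eq_neg_one_of_tangentHeight_nonneg hd hL hγper hγinj
    (hk.tangentHeight_nonneg_of_convex hγ hd hL hγper hγinj hK hKb hKi
      (fun t => Set.mem_image_of_mem φ (hmem t)) hfr hneg) he hpos heig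
/-- For a convex region there is no strictly positive continuous eigenfunction of the
double layer potential with eigenvalue of modulus less than 1. -/
theorem no_positive_eigenfunction_of_convex
    (L : ℝ) (hL : 0 < L)
    (q : ℝ → EuclideanSpace ℝ (Fin 2))
    (hq : ContDiff ℝ 2 q)
    (hper : ∀ s, q (s + L) = q s)
    (hunit : ∀ s, ‖deriv q s‖ = 1)
    (hinj : Set.InjOn q (Set.Ico 0 L))
    (horient : (∫ t in (0:ℝ)..L,
      (deriv (deriv q) t 1 * deriv q t 0 - deriv (deriv q) t 0 * deriv q t 1)) = 2 * π)
    (Ω : Set (EuclideanSpace ℝ (Fin 2)))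
    (hΩopen : IsOpen Ω) (hΩconn : IsConnected Ω)
    (hΩbd : Bornology.IsBounded Ω)
    (hfront : frontier Ω = Set.range q)
    (hconv : Convex ℝ (closure Ω))
    (ktil : ℝ → ℝ → ℝ)
    (hcont : Continuous (fun p : ℝ × ℝ => ktil p.1 p.2))
    (hoff : ∀ s t, q s ≠ q t → ktil s t = dlKernel q s t)
    (hdiag : ∀ t, ktil t t = dlDiag q t) :
    ¬ ∃ (lam : ℝ) (e : ℝ → ℝ), |lam| < 1 ∧ Continuous e ∧ (∀ t, e (t + L) = e t) ∧
      (∀ s : ℝ, 0 < e s) ∧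
      (∀ s : ℝ, lam * e s = (1 / π) * ∫ t in (0:ℝ)..L, ktil s t * e t) := by
  rintro ⟨lam, e, hlam, he, -, hpos, heig⟩
  have hlam_eq : lam = -1 := no_positive_eigenfunction_of_convex_general L hL q hq hper hunit hinj
    horient Ω hΩopen hΩbd hfront hconv ktil hcont hoff hdiag lam e he hpos heig
  norm_num [hlam_eq] at hlam
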